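/- Let 0 < p < 1, let r ≥ 1, and let H be a bipartite graph with left vertex set U of size k, right vertex set V of size m, and 2r-fold p-balancedness Δ. Let (L, R) be a biclique of H and let e = C(|L|, r) be the number of r-element subsets of L. Then ((1−p)/p)^r · e² · |R| ≤ m · max{p/(1−p), (1−p)/p}^r · e + Δ · e². -/

import Mathlib

/-- `(L, R)` is a biclique of the bipartite graph `H`. -/
def IsBiclique {k m : ℕ} (H : Fin k → Fin m → Bool) (L : Finset (Fin k))
    (R : Finset (Fin m)) : Prop :=
  ∀ u ∈ L, ∀ v ∈ R, H u v = true

/-- The `p`-biased character entry: `√((1−p)/p)` if `{i,j}` is an edge of `H` and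
`−√(p/(1−p))` otherwise. -/
noncomputable def pChar {k m : ℕ} (p : ℝ) (H : Fin k → Fin m → Bool)
    (i : Fin k) (j : Fin m) : ℝ :=
  if H i j then Real.sqrt ((1 - p) / p) else -Real.sqrt (p / (1 - p))

/-- `H` has `2r`-fold `p`-balancedness `Δ`: for all `S, T ⊆ U` with `|S|, |T| ≤ r` and
`S ≠ T`, `|∑_{j} u_{p,S}(j)·u_{p,T}(j)| ≤ Δ`, where `u_{p,S}(j) = ∏_{i∈S} H_p(i,j)`. -/
def PFoldBalanced {k m : ℕ} (H : Fin k → Fin m → Bool) (p : ℝ) (r : ℕ) (Δ : ℝ) : Prop :=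
  ∀ S T : Finset (Fin k), S.card ≤ r → T.card ≤ r → S ≠ T →
    |∑ j : Fin m, (∏ i ∈ S, pChar p H i j) * (∏ i ∈ T, pChar p H i j)| ≤ Δ

/-!
Write `u_S` for the product of the rows indexed by `S`, and count `∑ j, (∑ S, u_S j)²` in two ways,
where `S` ranges over the `e` subsets of `L` of size `r`. On a column `j ∈ R` every `u_S j` equals
`√((1−p)/p)^r`, so these columns alone contribute `((1−p)/p)^r·e²·|R|`. Expanding the square instead
gives the Gram matrix of the vectors `u_S`: its `e` diagonal entries are at most
`m·max{p/(1−p), (1−p)/p}^r`, and its `e(e−1)` off-diagonal entries are at most `Δ`.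
-/

section RowProd

variable {U V K : Type*} [CommSemiring K]

/-- The entrywise product of the rows of the matrix `A` indexed by `S`. For `A = pChar p H` this is
the vector `u_{p,S}` in the definition of balancedness. -/
def rowProd (A : U → V → K) (S : Finset U) (j : V) : K :=
  ∏ i ∈ S, A i j

theorem sum_powersetCard_rowProd_of_const {A : U → V → K} {L : Finset U} {j : V} {c : K}
    (hc : ∀ i ∈ L, A i j = c) (r : ℕ) :
    ∑ S ∈ L.powersetCard r, rowProd A S j = L.card.choose r * c ^ r := by
  have hprod : ∀ S ∈ L.powersetCard r, rowProd A S j = c ^ r := by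
    intro S hS
    obtain ⟨hSL, rfl⟩ := Finset.mem_powersetCard.mp hS
    exact Finset.prod_eq_pow_card fun i hi => hc i (hSL hi)
  rw [Finset.sum_congr rfl hprod, Finset.sum_const, Finset.card_powersetCard, nsmul_eq_mul]

end RowProd

theorem sum_sum_le_of_diag_le_of_offDiag_le {ι K : Type*} [CommRing K] [PartialOrder K]
    [IsOrderedRing K] {s : Finset ι} {f : ι → ι → K} {D Δ : K}
    (hdiag : ∀ a ∈ s, f a a ≤ D) (hoff : ∀ a ∈ s, ∀ b ∈ s, a ≠ b → f a b ≤ Δ) :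
    ∑ a ∈ s, ∑ b ∈ s, f a b ≤ s.card * D + Δ * (s.card * (s.card - 1)) := by
  classical
  have hrow : ∀ a ∈ s, ∑ b ∈ s, f a b ≤ D + (s.card - 1) * Δ := by
    intro a ha
    rw [← Finset.add_sum_erase s (f a) ha, ← Finset.cast_card_erase_of_mem ha, ← nsmul_eq_mul]
    refine add_le_add (hdiag a ha) (Finset.sum_le_card_nsmul _ _ _ fun b hb => ?_)
    exact hoff a ha b (Finset.mem_of_mem_erase hb) (Finset.ne_of_mem_erase hb).symm
  calc ∑ a ∈ s, ∑ b ∈ s, f a b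
      ≤ s.card • (D + (s.card - 1) * Δ) := Finset.sum_le_card_nsmul _ _ _ hrow
    _ = s.card * D + Δ * (s.card * (s.card - 1)) := by rw [nsmul_eq_mul]; ring

section LinearOrderedRing

variable {ι U V K : Type*} [CommRing K] [LinearOrder K] [IsStrictOrderedRing K]

theorem sum_sq_sum_le_of_gram_le [Fintype V] {s : Finset ι} {u : ι → V → K} {D Δ : K}
    (hdiag : ∀ a ∈ s, ∑ j, u a j ^ 2 ≤ D)
    (hoff : ∀ a ∈ s, ∀ b ∈ s, a ≠ b → ∑ j, u a j * u b j ≤ Δ) :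
    ∑ j, (∑ a ∈ s, u a j) ^ 2 ≤ s.card * D + Δ * (s.card * (s.card - 1)) := by
  calc ∑ j, (∑ a ∈ s, u a j) ^ 2
      = ∑ j, ∑ a ∈ s, ∑ b ∈ s, u a j * u b j := by simp_rw [sq, Finset.sum_mul_sum]
    _ = ∑ a ∈ s, ∑ b ∈ s, ∑ j, u a j * u b j := by
        rw [Finset.sum_comm]
        exact Finset.sum_congr rfl fun a _ => Finset.sum_comm
    _ ≤ s.card * D + Δ * (s.card * (s.card - 1)) :=
        sum_sum_le_of_diag_le_of_offDiag_le (fun a ha => by simpa only [sq] using hdiag a ha) hoff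

theorem card_mul_sq_le_sum_sq [Fintype V] {g : V → K} {R : Finset V} {a : K}
    (hg : ∀ j ∈ R, g j = a) : R.card * a ^ 2 ≤ ∑ j, g j ^ 2 := by
  calc (R.card : K) * a ^ 2
      = ∑ j ∈ R, g j ^ 2 := by
        rw [Finset.sum_congr rfl fun j hj => by rw [hg j hj], Finset.sum_const, nsmul_eq_mul]
    _ ≤ ∑ j, g j ^ 2 :=
        Finset.sum_le_univ_sum_of_nonneg fun j => sq_nonneg (g j)

theorem rowProd_sq_le_pow_card {A : U → V → K} {S : Finset U} {j : V} {M : K}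
    (hM : ∀ i ∈ S, A i j ^ 2 ≤ M) : rowProd A S j ^ 2 ≤ M ^ S.card := by
  rw [rowProd, ← Finset.prod_pow, ← Finset.prod_const]
  exact Finset.prod_le_prod (fun i _ => sq_nonneg (A i j)) hM

theorem stmt_15_general [Fintype V] {A : U → V → K} {L : Finset U} {R : Finset V} {r : ℕ}
    {c M Δ : K} (hc : ∀ i ∈ L, ∀ j ∈ R, A i j = c) (hM : ∀ i ∈ L, ∀ j, A i j ^ 2 ≤ M)
    (hΔ : ∀ S ∈ L.powersetCard r, ∀ T ∈ L.powersetCard r, S ≠ T →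
      ∑ j, rowProd A S j * rowProd A T j ≤ Δ) :
    (c ^ 2) ^ r * (L.card.choose r : K) ^ 2 * R.card
      ≤ Fintype.card V * M ^ r * L.card.choose r
        + Δ * (L.card.choose r * (L.card.choose r - 1)) := by
  have hdiag : ∀ S ∈ L.powersetCard r, ∑ j, rowProd A S j ^ 2 ≤ Fintype.card V * M ^ r := by
    intro S hS
    obtain ⟨hSL, rfl⟩ := Finset.mem_powersetCard.mp hS
    rw [← nsmul_eq_mul]
    exact Finset.sum_le_card_nsmul _ _ _ fun j _ =>
      rowProd_sq_le_pow_card fun i hi => hM i (hSL hi) j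
  have hlower := card_mul_sq_le_sum_sq fun j hj =>
    sum_powersetCard_rowProd_of_const (fun i hi => hc i hi j hj) r
  have hupper := sum_sq_sum_le_of_gram_le hdiag hΔ
  rw [Finset.card_powersetCard] at hupper
  linear_combination hlower + hupper

end LinearOrderedRing

section Balanced

variable {k m : ℕ} {H : Fin k → Fin m → Bool} {p : ℝ}

theorem pChar_sq_le_max (hp0 : 0 ≤ p) (hp1 : p ≤ 1) (i : Fin k) (j : Fin m) :
    pChar p H i j ^ 2 ≤ max (p / (1 - p)) ((1 - p) / p) := by
  have hq : 0 ≤ 1 - p := sub_nonneg.mpr hp1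
  unfold pChar
  split_ifs
  · rw [Real.sq_sqrt (div_nonneg hq hp0)]
    exact le_max_right _ _
  · rw [neg_sq, Real.sq_sqrt (div_nonneg hp0 hq)]
    exact le_max_left _ _

theorem IsBiclique.pChar_eq {L : Finset (Fin k)} {R : Finset (Fin m)} (hbic : IsBiclique H L R) :
    ∀ i ∈ L, ∀ j ∈ R, pChar p H i j = √((1 - p) / p) :=
  fun i hi j hj => if_pos (hbic i hi j hj)

theorem PFoldBalanced.nonneg {r : ℕ} {Δ : ℝ} (hbal : PFoldBalanced H p r Δ) (hr : 1 ≤ r)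
    (i : Fin k) : 0 ≤ Δ :=
  (abs_nonneg _).trans
    (hbal ∅ {i} (Nat.zero_le r) (by rwa [Finset.card_singleton]) (Finset.singleton_ne_empty i).symm)

theorem PFoldBalanced.mul_choose_card_nonneg {r : ℕ} {Δ : ℝ} (hbal : PFoldBalanced H p r Δ)
    (hr : 1 ≤ r) (L : Finset (Fin k)) : 0 ≤ Δ * L.card.choose r := by
  obtain rfl | ⟨i, -⟩ := L.eq_empty_or_nonempty
  · rw [Finset.card_empty, Nat.choose_eq_zero_of_lt hr, Nat.cast_zero, mul_zero]
  · exact mul_nonneg (hbal.nonneg hr i) (Nat.cast_nonneg _)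

theorem PFoldBalanced.sum_rowProd_mul_le {r : ℕ} {Δ : ℝ} (hbal : PFoldBalanced H p r Δ)
    (L : Finset (Fin k)) : ∀ S ∈ L.powersetCard r, ∀ T ∈ L.powersetCard r, S ≠ T →
      ∑ j, rowProd (pChar p H) S j * rowProd (pChar p H) T j ≤ Δ :=
  fun S hS T hT hST => (le_abs_self _).trans
    (hbal S T (Finset.mem_powersetCard.mp hS).2.le (Finset.mem_powersetCard.mp hT).2.le hST)

end Balanced

/-- If `H` (left size `k`, right size `m`) has `2r`-fold `p`-balancedness `Δ` and
`(L, R)` is a biclique of `H`, then with `e = C(|L|, r)` one has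
`((1−p)/p)^r·e²·|R| ≤ m·max{p/(1−p), (1−p)/p}^r·e + Δ·e²`. -/
theorem stmt_15 {k m r : ℕ} (hr : 1 ≤ r) (p : ℝ) (hp0 : 0 < p) (hp1 : p < 1)
    (H : Fin k → Fin m → Bool) (Δ : ℝ) (hbal : PFoldBalanced H p r Δ)
    (L : Finset (Fin k)) (R : Finset (Fin m)) (hbic : IsBiclique H L R) :
    ((1 - p) / p) ^ r * (L.card.choose r : ℝ) ^ 2 * R.card
      ≤ (m : ℝ) * (max (p / (1 - p)) ((1 - p) / p)) ^ r * (L.card.choose r)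
        + Δ * (L.card.choose r : ℝ) ^ 2 := by
  have hsharp := stmt_15_general hbic.pChar_eq (fun i _ => pChar_sq_le_max hp0.le hp1.le i)
    (hbal.sum_rowProd_mul_le L)
  rw [Real.sq_sqrt (div_nonneg (sub_nonneg.mpr hp1.le) hp0.le), Fintype.card_fin] at hsharp
  linear_combination hsharp + hbal.mul_choose_card_nonneg hr L
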